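/- arXiv:1902.01467 — 3 statements merged into one kernel-verified Lean document; each statement's English description precedes it below -/
import Mathlib

section
/- Let 𝔤 be a finite-dimensional real Lie algebra and let 𝔮 be a Lie subalgebra of 𝔤 whose polar 𝔮^⊥ with respect to the Killing form is an abelian Lie subalgebra. Then for every z ∈ 𝔮^⊥ and every y ∈ 𝔤 one has [z,[z,y]] ∈ 𝔮^⊥; that is, the image of (ad_z)² is contained in 𝔮^⊥. -/
/-!
Invariance of the Killing form makes `𝔮` act on `𝔮^⊥`, so for `u ∈ 𝔮` and `z ∈ 𝔮^⊥` both `z` and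
`⁅z, u⁆` lie in the abelian algebra `𝔮^⊥`, whence `⁅z, ⁅z, u⁆⁆ = 0`. Invariance also makes `(ad z)²`
self-adjoint, so `⁅z, ⁅z, y⁆⁆` pairs with `u` as `y` pairs with `⁅z, ⁅z, u⁆⁆ = 0`.
-/

open LinearMap (BilinForm)

theorem apply_lie_lie_eq_lie_lie_apply {R L M : Type*} [CommRing R] [LieRing L] [AddCommGroup M]
    [Module R M] [LieRingModule L M] {Φ : BilinForm R M} (hΦ : Φ.lieInvariant L)
    (x : L) (m n : M) : Φ m ⁅x, ⁅x, n⁆⁆ = Φ ⁅x, ⁅x, m⁆⁆ n := by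
  rw [hΦ x ⁅x, m⁆ n, hΦ x m ⁅x, n⁆, neg_neg]

section LieSubalgebra

variable {R L : Type*} [CommRing R] [LieRing L] [LieAlgebra R L] {q : LieSubalgebra R L}

theorem mem_orthogonal_killingForm_iff {x : L} :
    x ∈ (killingForm R L).orthogonal q.toSubmodule ↔ ∀ u ∈ q, killingForm R L x u = 0 :=
  forall₂_congr fun u _ ↦ by rw [LieModule.traceForm_comm R L L u x]

variable {Φ : BilinForm R L}

theorem lie_mem_orthogonal_toSubmodule (hΦ : Φ.lieInvariant L) {u z : L} (hu : u ∈ q)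
    (hz : z ∈ Φ.orthogonal q.toSubmodule) : ⁅u, z⁆ ∈ Φ.orthogonal q.toSubmodule :=
  (LieAlgebra.InvariantForm.orthogonal Φ (fun v : q ↦ hΦ v) q.toLieSubmodule).lie_mem
    (x := ⟨u, hu⟩) hz

theorem ad_sq_image_subset_polar_general (hΦ : Φ.lieInvariant L)
    (habel : ∀ x y : L, x ∈ Φ.orthogonal q.toSubmodule → y ∈ Φ.orthogonal q.toSubmodule →
      ⁅x, y⁆ = 0)
    {z : L} (hz : z ∈ Φ.orthogonal q.toSubmodule) (y : L) :
    ⁅z, ⁅z, y⁆⁆ ∈ Φ.orthogonal q.toSubmodule := by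
  intro u hu
  have hzu : ⁅z, u⁆ ∈ Φ.orthogonal q.toSubmodule :=
    lie_skew z u ▸ neg_mem (lie_mem_orthogonal_toSubmodule hΦ hu hz)
  have hzzu : ⁅z, ⁅z, u⁆⁆ = 0 := habel z ⁅z, u⁆ hz hzu
  calc
    Φ u ⁅z, ⁅z, y⁆⁆ = Φ ⁅z, ⁅z, u⁆⁆ y := apply_lie_lie_eq_lie_lie_apply hΦ z u y
    _ = 0 := by rw [hzzu, map_zero, LinearMap.zero_apply]

end LieSubalgebra

/-- Let `𝔤` be a finite-dimensional real Lie algebra and `𝔮` a Lie subalgebra whose polar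
`𝔮^⊥` with respect to the Killing form is an abelian Lie subalgebra.  Then for every
`z ∈ 𝔮^⊥` and every `y ∈ 𝔤`, one has `⁅z, ⁅z, y⁆⁆ ∈ 𝔮^⊥`; i.e. the image of `(ad z)²` is
contained in `𝔮^⊥`. -/
theorem ad_sq_image_subset_polar
    (L : Type*) [LieRing L] [LieAlgebra ℝ L] [FiniteDimensional ℝ L]
    (q : LieSubalgebra ℝ L)
    (habel : ∀ x y : L,
      (∀ u ∈ q, killingForm ℝ L x u = 0) →
      (∀ u ∈ q, killingForm ℝ L y u = 0) → ⁅x, y⁆ = 0) :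
    ∀ z : L, (∀ u ∈ q, killingForm ℝ L z u = 0) →
      ∀ y : L, ∀ u ∈ q, killingForm ℝ L ⁅z, ⁅z, y⁆⁆ u = 0 := by
  simp only [← mem_orthogonal_killingForm_iff] at habel ⊢
  exact fun _ hz ↦
    ad_sq_image_subset_polar_general (LieModule.traceForm_lieInvariant ℝ L L) habel hz
end

section
/- Let 𝔤 be a finite-dimensional real Lie algebra and let 𝔮 be a Lie subalgebra of 𝔤 whose polar 𝔮^⊥ with respect to the Killing form is an abelian Lie subalgebra. Then for every z ∈ 𝔮^⊥ the linear endomorphism ad_z of 𝔤 satisfies (ad_z)³ = 0, i.e. [z,[z,[z,y]]] = 0 for all y ∈ 𝔤. -/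
/-!
Write `𝔫 = 𝔮^⊥`. As `𝔫` is abelian, invariance gives `[z, 𝔤] ⊆ 𝔫^⊥` for `z ∈ 𝔫`, and `𝔫^⊥` is `𝔮`
plus the radical of the form. The radical lies in `𝔫`, so it is killed by `ad z`; hence
`[z, [z, 𝔤]] ⊆ [z, 𝔮]`. Finally `[z, 𝔮] ⊆ 𝔫` because `𝔫` is stable under `𝔮`, and `ad z` kills `𝔫`.
-/

section BilinForm

variable {R K V : Type*} [AddCommGroup V]

theorem orthogonal_eq_dualCoannihilator_map [CommRing R] [Module R V]
    (B : LinearMap.BilinForm R V) (N : Submodule R V) :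
    B.orthogonal N = (N.map B).dualCoannihilator := by
  ext x
  simp [Submodule.mem_dualCoannihilator]

theorem mem_orthogonal_iff_of_isRefl [CommRing R] [Module R V]
    {B : LinearMap.BilinForm R V} (hB : B.IsRefl) {N : Submodule R V} {x : V} :
    x ∈ B.orthogonal N ↔ ∀ u ∈ N, B x u = 0 :=
  forall₂_congr fun _ _ ↦ hB.eq_iff

theorem orthogonal_eq_comap_dualAnnihilator [CommRing R] [Module R V]
    {B : LinearMap.BilinForm R V} (hB : B.IsRefl) (N : Submodule R V) :
    B.orthogonal N = N.dualAnnihilator.comap B := by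
  ext x
  rw [mem_orthogonal_iff_of_isRefl hB, Submodule.mem_comap, Submodule.mem_dualAnnihilator]

theorem orthogonal_orthogonal_eq_sup_ker [Field K] [Module K V]
    {B : LinearMap.BilinForm K V} (hB : B.IsRefl) (W : Submodule K V) [FiniteDimensional K W] :
    B.orthogonal (B.orthogonal W) = W ⊔ LinearMap.ker B := by
  rw [orthogonal_eq_comap_dualAnnihilator hB, orthogonal_eq_dualCoannihilator_map,
    Subspace.dualCoannihilator_dualAnnihilator_eq, Submodule.comap_map_eq]

theorem ker_le_orthogonal [CommRing R] [Module R V]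
    {B : LinearMap.BilinForm R V} (hB : B.IsRefl) (N : Submodule R V) :
    LinearMap.ker B ≤ B.orthogonal N :=
  LinearMap.BilinForm.orthogonal_top_eq_ker hB ▸ LinearMap.BilinForm.orthogonal_le le_top

end BilinForm

theorem lie_mem_orthogonal_of_forall_lie_eq_zero {R L M : Type*} [CommRing R] [LieRing L]
    [AddCommGroup M] [Module R M] [LieRingModule L M] {Φ : LinearMap.BilinForm R M}
    (hΦ : Φ.lieInvariant L) {N : Submodule R M} {z : L} (hz : ∀ w ∈ N, ⁅z, w⁆ = 0) (y : M) :
    ⁅z, y⁆ ∈ Φ.orthogonal N := by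
  intro w hw
  rw [← neg_eq_zero, ← hΦ, hz w hw, map_zero, LinearMap.zero_apply]

theorem lie_mem_orthogonal_of_mem_lieSubalgebra {R L : Type*} [CommRing R] [LieRing L]
    [LieAlgebra R L] {Φ : LinearMap.BilinForm R L} (hΦ : Φ.lieInvariant L) {q : LieSubalgebra R L}
    {u z : L} (hu : u ∈ q) (hz : z ∈ Φ.orthogonal q.toSubmodule) :
    ⁅u, z⁆ ∈ Φ.orthogonal q.toSubmodule :=
  (LieAlgebra.InvariantForm.orthogonal Φ (fun x : q ↦ hΦ x) q.toLieSubmodule).lie_mem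
    (x := ⟨u, hu⟩) hz

theorem ad_cube_eq_zero_general {K L : Type*} [Field K] [LieRing L] [LieAlgebra K L]
    {Φ : LinearMap.BilinForm K L} (hΦ_inv : Φ.lieInvariant L) (hΦ_refl : Φ.IsRefl)
    (q : LieSubalgebra K L) [FiniteDimensional K q]
    (habel : ∀ x ∈ Φ.orthogonal q.toSubmodule, ∀ y ∈ Φ.orthogonal q.toSubmodule, ⁅x, y⁆ = 0)
    {z : L} (hz : z ∈ Φ.orthogonal q.toSubmodule) :
    LieAlgebra.ad K L z ^ 3 = 0 ∧ ∀ y : L, ⁅z, ⁅z, ⁅z, y⁆⁆⁆ = 0 := by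
  suffices lie_lie_lie : ∀ y : L, ⁅z, ⁅z, ⁅z, y⁆⁆⁆ = 0 from
    ⟨LinearMap.ext fun y ↦ by simpa [pow_succ] using lie_lie_lie y, lie_lie_lie⟩
  intro y
  have hzy : ⁅z, y⁆ ∈ q.toSubmodule ⊔ LinearMap.ker Φ := by
    have : FiniteDimensional K q.toSubmodule := ‹FiniteDimensional K q›
    rw [← orthogonal_orthogonal_eq_sup_ker hΦ_refl]
    exact lie_mem_orthogonal_of_forall_lie_eq_zero hΦ_inv (habel z hz) y
  obtain ⟨u, hu, r, hr, hur⟩ := Submodule.mem_sup.mp hzy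
  have hzr : ⁅z, r⁆ = 0 := habel z hz r (ker_le_orthogonal hΦ_refl _ hr)
  have hzu : ⁅z, u⁆ ∈ Φ.orthogonal q.toSubmodule := by
    rw [← lie_skew]
    exact neg_mem (lie_mem_orthogonal_of_mem_lieSubalgebra hΦ_inv hu hz)
  calc ⁅z, ⁅z, ⁅z, y⁆⁆⁆
    _ = ⁅z, ⁅z, u⁆⁆ := by rw [← hur, lie_add, hzr, add_zero]
    _ = 0 := habel z hz _ hzu

/-- Let `𝔤` be a finite-dimensional real Lie algebra and `𝔮` a Lie subalgebra whose polar
`𝔮^⊥` with respect to the Killing form is an abelian Lie subalgebra.  Then for every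
`z ∈ 𝔮^⊥` the endomorphism `ad z` satisfies `(ad z)³ = 0`, i.e. `⁅z, ⁅z, ⁅z, y⁆⁆⁆ = 0`
for all `y ∈ 𝔤`. -/
theorem ad_cube_eq_zero
    (L : Type*) [LieRing L] [LieAlgebra ℝ L] [FiniteDimensional ℝ L]
    (q : LieSubalgebra ℝ L)
    (habel : ∀ x y : L,
      (∀ u ∈ q, killingForm ℝ L x u = 0) →
      (∀ u ∈ q, killingForm ℝ L y u = 0) → ⁅x, y⁆ = 0) :
    ∀ z : L, (∀ u ∈ q, killingForm ℝ L z u = 0) →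
      (LieAlgebra.ad ℝ L z) ^ 3 = 0 ∧ ∀ y : L, ⁅z, ⁅z, ⁅z, y⁆⁆⁆ = 0 := by
  have hrefl : (killingForm ℝ L).IsRefl := (LieModule.traceForm_isSymm ℝ L L).isRefl
  have mem_polar {x : L} := mem_orthogonal_iff_of_isRefl hrefl (N := q.toSubmodule) (x := x)
  exact fun z hz ↦ ad_cube_eq_zero_general (LieModule.traceForm_lieInvariant ℝ L L) hrefl q
    (fun x hx y hy ↦ habel x y (mem_polar.mp hx) (mem_polar.mp hy)) (mem_polar.mpr hz)
end

section
/- Let X, Y be linearly independent null vectors in ℂ^N (with respect to the standard symmetric bilinear form) such that ⟨X,Y⟩ = 0. Then N > 3, and there exist null vectors X', Y' ∈ ℂ^N such that the Gram matrix of (X, X', Y, Y') is diag(R,R) with R = [[0,1],[1,0]]; that is, ⟨X',X'⟩ = ⟨Y',Y'⟩ = 0, ⟨X,X'⟩ = ⟨Y,Y'⟩ = 1, and ⟨X,Y'⟩ = ⟨X',Y⟩ = ⟨X',Y'⟩ = 0. -/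
open Matrix

/-!
Let `u` be a family dual to the isotropic family `X`, which exists because the form is
nondegenerate. Adding elements of the span of `X` to the `u i` changes their Gram matrix but not
their pairings with `X`; subtracting `½ ∑ j, ⟨u i, u j⟩ X j` from each `u i` cancels that Gram
matrix, each of the two cross terms contributing one half of it. The resulting vectors and `X`
have an invertible joint Gram matrix, hence are linearly independent, which bounds the dimension.
-/

theorem exists_forall_apply_eq_ite_of_linearIndependent {ι K V : Type*} [Finite ι] [DecidableEq ι]
    [Field K] [AddCommGroup V] [Module K V] {f : ι → Module.Dual K V}
    (hf : LinearIndependent K f) :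
    ∃ u : ι → V, ∀ i j, f i (u j) = if i = j then 1 else 0 := by
  have := Fintype.ofFinite ι
  have hsurj : Function.Surjective (Fintype.linearCombination K f).flip :=
    LinearMap.flip_surjective_iff₁.2
      (linearIndependent_iff_injective_fintypeLinearCombination.1 hf)
  choose u hu using fun j ↦ hsurj (LinearMap.proj j)
  refine ⟨u, fun i j ↦ ?_⟩
  simpa [Pi.single_apply, eq_comm] using LinearMap.congr_fun (hu j) (Pi.single i 1)

/-- The families `X` and `X'` together have the Gram matrix of an orthogonal sum of hyperbolic
planes, the `i`-th plane being spanned by `X i` and `X' i`. Only the pairings of `X` with `X'` in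
this order are recorded, so the notion is meant for symmetric forms. -/
structure IsHyperbolicPair {ι R M : Type*} [DecidableEq ι] [CommRing R] [AddCommGroup M]
    [Module R M] (B : LinearMap.BilinForm R M) (X X' : ι → M) : Prop where
  left_isotropic : ∀ i j, B (X i) (X j) = 0
  right_isotropic : ∀ i j, B (X' i) (X' j) = 0
  pairing : ∀ i j, B (X i) (X' j) = if i = j then 1 else 0

section CommRing

variable {ι R M : Type*} [DecidableEq ι] [CommRing R] [AddCommGroup M] [Module R M]
  {B : LinearMap.BilinForm R M} {X X' : ι → M}

theorem IsHyperbolicPair.linearIndependent (h : IsHyperbolicPair B X X') (hB : B.IsSymm) :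
    LinearIndependent R (Sum.elim X X') := by
  have pairing_symm (i j : ι) : B (X' i) (X j) = if i = j then 1 else 0 := by
    rw [hB.eq, h.pairing]
    simp only [eq_comm]
  refine .of_pairwise_dual_eq_zero_one _ (Sum.elim (fun i ↦ B (X' i)) (fun i ↦ B (X i))) ?_ ?_
  · rintro (i | i) (j | j) hij <;>
      simp_all [h.left_isotropic, h.right_isotropic, h.pairing]
  · rintro (i | i) <;> simp [h.pairing, pairing_symm]

theorem isHyperbolicPair_sub_half_sum [Fintype ι] [Invertible (2 : R)] (hB : B.IsSymm)
    (hX : ∀ i j, B (X i) (X j) = 0) {u : ι → M}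
    (hu : ∀ i j, B (X i) (u j) = if i = j then 1 else 0) :
    IsHyperbolicPair B X (fun i ↦ u i - (⅟2 : R) • ∑ j, B (u i) (u j) • X j) where
  left_isotropic := hX
  right_isotropic i j := by
    have hu' (i j : ι) : B (u i) (X j) = if j = i then 1 else 0 := by rw [hB.eq, hu]
    calc
      B (u i - (⅟2 : R) • ∑ k, B (u i) (u k) • X k) (u j - (⅟2 : R) • ∑ k, B (u j) (u k) • X k)
      _ = B (u i) (u j) - ⅟2 * B (u j) (u i) - ⅟2 * B (u i) (u j) := by
        simp [hX, hu, hu', sub_right_comm]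
      _ = (1 - (⅟2 + ⅟2)) * B (u i) (u j) := by
        rw [hB.eq (u j) (u i)]
        ring
      _ = 0 := by rw [invOf_two_add_invOf_two, sub_self, zero_mul]
  pairing i j := by simp [hX, hu]

end CommRing

theorem exists_hyperbolic_complement_general {ι K V : Type*} [Finite ι] [DecidableEq ι] [Field K]
    [Invertible (2 : K)] [AddCommGroup V] [Module K V] {B : LinearMap.BilinForm K V}
    (hB : B.IsSymm) (hnondeg : B.Nondegenerate) {X : ι → V} (hX : ∀ i j, B (X i) (X j) = 0)
    (hind : LinearIndependent K X) :
    ∃ X' : ι → V, IsHyperbolicPair B X X' ∧ LinearIndependent K (Sum.elim X X') := by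
  have := Fintype.ofFinite ι
  obtain ⟨u, hu⟩ := exists_forall_apply_eq_ite_of_linearIndependent
    (hind.map' B hnondeg.ker_eq_bot)
  have hyp := isHyperbolicPair_sub_half_sum hB hX hu
  exact ⟨_, hyp, hyp.linearIndependent hB⟩

section DotProduct

variable (n R : Type*) [Fintype n] [CommSemiring R]

theorem isSymm_dotProductBilin :
    LinearMap.BilinForm.IsSymm (dotProductBilin R R : LinearMap.BilinForm R (n → R)) :=
  ⟨dotProduct_comm⟩

theorem nondegenerate_dotProductBilin :
    LinearMap.BilinForm.Nondegenerate (dotProductBilin R R : LinearMap.BilinForm R (n → R)) :=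
  ⟨fun _ ↦ dotProduct_eq_zero_iff.1,
    fun v h ↦ dotProduct_eq_zero_iff.1 fun w ↦ (dotProduct_comm v w).trans (h w)⟩

end DotProduct

/-- Let `X, Y` be linearly independent null vectors in `ℂ^N` with `⟨X, Y⟩ = 0` (standard
symmetric bilinear form).  Then `N > 3` and there exist null vectors `X', Y'` such that the
Gram matrix of `(X, X', Y, Y')` is `diag(R, R)` with `R = [[0,1],[1,0]]`. -/
theorem exists_hyperbolic_complement
    (N : ℕ) (X Y : Fin N → ℂ)
    (hXnull : dotProduct X X = 0) (hYnull : dotProduct Y Y = 0)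
    (hind : LinearIndependent ℂ ![X, Y])
    (hXY : dotProduct X Y = 0) :
    3 < N ∧ ∃ X' Y' : Fin N → ℂ,
      dotProduct X' X' = 0 ∧ dotProduct Y' Y' = 0 ∧
      dotProduct X X' = 1 ∧ dotProduct Y Y' = 1 ∧
      dotProduct X Y' = 0 ∧ dotProduct X' Y = 0 ∧
      dotProduct X' Y' = 0 := by
  have isotropic (i j : Fin 2) : dotProductBilin ℂ ℂ (![X, Y] i) (![X, Y] j) = 0 := by
    fin_cases i <;> fin_cases j <;> simp [hXnull, hYnull, hXY, dotProduct_comm Y X]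
  obtain ⟨Z, hyp, hli⟩ := exists_hyperbolic_complement_general
    (isSymm_dotProductBilin (Fin N) ℂ) (nondegenerate_dotProductBilin (Fin N) ℂ) isotropic hind
  refine ⟨by simpa [Nat.lt_iff_add_one_le] using hli.fintype_card_le_finrank, Z 0, Z 1,
    hyp.right_isotropic 0 0, hyp.right_isotropic 1 1, hyp.pairing 0 0, hyp.pairing 1 1,
    hyp.pairing 0 1, ?_, hyp.right_isotropic 0 1⟩
  exact (dotProduct_comm _ _).trans (hyp.pairing 1 0)
end
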